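/- Let k₀ ∈ ℝ^{m₁} × ℝ^{m₂} be fixed. Let Ψ₁ : B̄^{m₁}(0,1) × {0} → ℝ^{m₁} × ℝ^{m₂} and Ψ₂ : {0} × B̄^{m₂}(0,1) → ℝ^{m₁} × ℝ^{m₂} be continuous maps satisfying ‖Ψ₁(r) - (r + k₀)‖ ≤ 1/4 for all r in B̄^{m₁}(0,1) × {0}, and ‖Ψ₂(s) - (s + k₀)‖ ≤ 1/4 for all s in {0} × B̄^{m₂}(0,1). Then the images of Ψ₁ and Ψ₂ have nonempty intersection. -/

import Mathlib

open Set Metric MeasureTheory Polynomial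
open Function (Bijective IsFixedPt)

/-!
Write `d z = Ψ₁ (z.1, 0) - Ψ₂ (0, z.2)`. In `z + (-(d z).1, (d z).2)` the point `z` and the
translation `k₀` cancel, leaving only the two errors up to sign, so this map sends the unit ball
of the product to itself. At the fixed point given by Brouwer's theorem `d` vanishes.

Brouwer's theorem rests on the absence of `C¹` retractions. If `r` is the identity on the frontier
of a compact convex set `s`, then `∫ x in s, det (1 + t • (r' x - 1))` is a polynomial in `t`. For
small `t > 0` the map `x + t • (r x - x)` is a bijection of `s`, so the polynomial equals the volume
of `s` there, hence also at `t = 1`. If `r` took its values in the frontier, then `det (r' x)` would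
vanish at interior points and the integral at `t = 1` would be zero.
-/

section Polynomial

theorem exists_polynomial_eval_eq_det_one_add_smul {R M : Type*} [CommRing R] [Nontrivial R]
    [AddCommGroup M] [Module R M] [Module.Free R M] [Module.Finite R M] (f : M →ₗ[R] M) :
    ∃ p : R[X], p.natDegree ≤ Module.finrank R M ∧
      ∀ t : R, p.eval t = LinearMap.det (1 + t • f) := by
  classical
  let b := Module.Free.chooseBasis R M
  let A := LinearMap.toMatrix b b f
  refine ⟨((X : R[X]) • A.map C + (1 : Matrix _ _ R).map C).det, ?_, fun t => ?_⟩
  · rw [Module.finrank_eq_card_chooseBasisIndex]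
    exact natDegree_det_X_add_C_le A 1
  · have hA : LinearMap.toMatrix b b (1 + t • f) = t • A + 1 := by
      rw [map_add, map_smul, LinearMap.toMatrix_one, add_comm]
    rw [← LinearMap.det_toMatrix b, hA, ← coe_evalRingHom, RingHom.map_det]
    congr 1
    ext i j
    by_cases hij : i = j <;> simp [hij, mul_comm t]

theorem integral_eval_eq_of_infinite {α 𝕜 : Type*} [RCLike 𝕜] [MeasurableSpace α]
    {μ : Measure α} {p : α → 𝕜[X]} {n : ℕ} (hp : ∀ x, (p x).natDegree ≤ n)
    {T : Set 𝕜} (hT : T.Infinite) (hint : ∀ t ∈ T, Integrable (fun x => (p x).eval t) μ)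
    {c : 𝕜} (hc : ∀ t ∈ T, ∫ x, (p x).eval t ∂μ = c) (y : 𝕜) :
    ∫ x, (p x).eval y ∂μ = c := by
  classical
  obtain ⟨s, hsT, hs⟩ := hT.exists_subset_card_eq (n + 1)
  have hinterp (x : α) :
      (p x).eval y = ∑ t ∈ s, (Lagrange.basis s id t).eval y * (p x).eval t := by
    have hdeg : (p x).degree < s.card :=
      degree_le_natDegree.trans_lt (by exact_mod_cast (hp x).trans_lt (by omega))
    conv_lhs => rw [Lagrange.eq_interpolate Function.injective_id.injOn hdeg]
    simp only [Lagrange.interpolate_apply, eval_finsetSum, eval_mul, eval_C, id, mul_comm]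
  have hbasis : ∑ t ∈ s, (Lagrange.basis s id t).eval y = 1 := by
    rw [← eval_finsetSum, Lagrange.sum_basis Function.injective_id.injOn
      (Finset.card_pos.1 (by omega)), eval_one]
  calc ∫ x, (p x).eval y ∂μ
      = ∫ x, ∑ t ∈ s, (Lagrange.basis s id t).eval y * (p x).eval t ∂μ := by simp only [hinterp]
    _ = ∑ t ∈ s, (Lagrange.basis s id t).eval y * ∫ x, (p x).eval t ∂μ := by
        rw [integral_finsetSum _ fun t ht => (hint t (hsT ht)).const_mul _]
        simp only [integral_const_mul]
    _ = ∑ t ∈ s, (Lagrange.basis s id t).eval y * c :=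
        Finset.sum_congr rfl fun t ht => by rw [hc t (hsT ht)]
    _ = c := by rw [← Finset.sum_mul, hbasis, one_mul]

end Polynomial

section LipschitzPerturbation

theorem inter_frontier_nonempty_of_isPreconnected {X : Type*} [TopologicalSpace X] {s t : Set X}
    (ht : IsPreconnected t) (hs : (t ∩ s).Nonempty) (hsc : (t ∩ sᶜ).Nonempty) :
    (t ∩ frontier s).Nonempty := by
  rw [frontier_eq_closure_inter_closure]
  exact isPreconnected_closed_iff.1 ht _ _ isClosed_closure isClosed_closure
    (fun x _ => (em (x ∈ s)).imp (fun h => subset_closure h) fun h => subset_closure h)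
    (hs.mono (inter_subset_inter_right t subset_closure))
    (hsc.mono (inter_subset_inter_right t subset_closure))

theorem bijective_id_add_of_lipschitzWith {E : Type*} [NormedAddCommGroup E] [CompleteSpace E]
    {K : NNReal} {h : E → E} (hh : LipschitzWith K h) (hK : K < 1) :
    Bijective fun x => x + h x := by
  constructor
  · exact (AntilipschitzWith.id.add_lipschitzWith hh (by simpa using hK)).injective
  · intro y
    have hcontr : ContractingWith K fun x => y - h x :=
      ⟨hK, by simpa using (LipschitzWith.const y).sub hh⟩
    obtain ⟨x, hx⟩ : ∃ x, IsFixedPt (fun x => y - h x) x := ⟨_, hcontr.fixedPoint_isFixedPt⟩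
    exact ⟨x, (sub_eq_iff_eq_add.1 hx.eq).symm⟩

variable {E F : Type*} [NormedAddCommGroup E] [NormedSpace ℝ E] [SeminormedAddCommGroup F]
  {s : Set E} {K : NNReal}

theorem lipschitzWith_indicator_of_eqOn_frontier {h : E → F} (hs : IsClosed s)
    (hh : LipschitzOnWith K h s) (h0 : EqOn h 0 (frontier s)) :
    LipschitzWith K (s.indicator h) := by
  have norm_le {x y : E} (hx : x ∈ s) (hy : y ∉ s) : ‖h x‖ ≤ K * dist x y := by
    obtain ⟨z, hz, hzs⟩ := inter_frontier_nonempty_of_isPreconnected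
      (convex_segment x y).isPreconnected ⟨x, left_mem_segment ℝ x y, hx⟩
      ⟨y, right_mem_segment ℝ x y, hy⟩
    calc ‖h x‖ = dist (h x) (h z) := by rw [h0 hzs, Pi.zero_apply, dist_zero_right]
      _ ≤ K * dist x z := hh.dist_le_mul x hx z (hs.frontier_subset hzs)
      _ ≤ K * dist x y := by
          gcongr
          linarith [dist_add_dist_of_mem_segment hz, dist_nonneg (x := z) (y := y)]
  refine LipschitzWith.of_dist_le_mul fun x y => ?_
  by_cases hx : x ∈ s <;> by_cases hy : y ∈ s
  · simpa only [indicator_of_mem, hx, hy] using hh.dist_le_mul x hx y hy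
  · simpa only [indicator_of_mem hx, indicator_of_notMem hy, dist_zero_right] using norm_le hx hy
  · simpa only [indicator_of_mem hy, indicator_of_notMem hx, dist_zero_left, dist_comm x y]
      using norm_le hy hx
  · simp only [indicator_of_notMem, hx, hy, not_false_eq_true, dist_self]
    positivity

theorem bijOn_id_add_of_lipschitzOnWith [CompleteSpace E] {h : E → E} (hs : IsClosed s)
    (hh : LipschitzOnWith K h s) (hK : K < 1) (h0 : EqOn h 0 (frontier s)) :
    BijOn (fun x => x + h x) s s := by
  have hbij := bijective_id_add_of_lipschitzWith
    (lipschitzWith_indicator_of_eqOn_frontier hs hh h0) hK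
  have hcompl : BijOn (fun x => x + s.indicator h x) sᶜ sᶜ :=
    (bijOn_id _).congr fun x hx => by simp [indicator_of_notMem hx]
  rw [← compl_compl s]
  refine (hcompl.compl hbij).congr fun x hx => ?_
  simp only [indicator_of_mem (not_not.1 hx)]

end LipschitzPerturbation

section Volume

variable {E : Type*} [NormedAddCommGroup E] [NormedSpace ℝ E] [FiniteDimensional ℝ E]

theorem det_one_add_ne_zero_of_norm_lt_one {A : E →L[ℝ] E} (hA : ‖A‖ < 1) :
    (1 + A).det ≠ 0 := by
  have := FiniteDimensional.complete ℝ E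
  have hunit : IsUnit (1 + A) := by
    simpa using isUnit_one_sub_of_norm_lt_one (x := -A) (by rwa [norm_neg])
  exact (LinearMap.isUnit_det _ (hunit.map ContinuousLinearMap.toLinearMapRingHom)).ne_zero

theorem det_one_add_pos_of_norm_lt_one {A : E →L[ℝ] E} (hA : ‖A‖ < 1) : 0 < (1 + A).det := by
  have hcont : Continuous fun t : ℝ => (1 + t • A).det :=
    ContinuousLinearMap.continuous_det.comp (by fun_prop)
  by_contra! hneg
  obtain ⟨t, ht, hdet⟩ : (0 : ℝ) ∈ (fun t : ℝ => (1 + t • A).det) '' Icc 0 1 :=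
    intermediate_value_Icc' zero_le_one hcont.continuousOn
      ⟨by simpa using hneg, by simp [ContinuousLinearMap.det]⟩
  refine det_one_add_ne_zero_of_norm_lt_one ?_ hdet
  calc ‖t • A‖ = t * ‖A‖ := by rw [norm_smul, Real.norm_of_nonneg ht.1]
    _ ≤ ‖A‖ := mul_le_of_le_one_left (norm_nonneg A) ht.2
    _ < 1 := hA

variable [MeasurableSpace E] [BorelSpace E] (μ : Measure E) [μ.IsAddHaarMeasure] {s : Set E}

theorem setIntegral_det_one_add_of_norm_le {C : ℝ} (hC : C < 1) (hs : IsClosed s)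
    (hconv : Convex ℝ s) {h : E → E} {h' : E → E →L[ℝ] E}
    (hh : ∀ x ∈ s, HasFDerivWithinAt h (h' x) s x) (hh' : ∀ x ∈ s, ‖h' x‖ ≤ C)
    (h0 : EqOn h 0 (frontier s)) :
    ∫ x in s, (1 + h' x).det ∂μ = μ.real s := by
  have := FiniteDimensional.complete ℝ E
  have hbij : BijOn (fun x => x + h x) s s :=
    bijOn_id_add_of_lipschitzOnWith hs
      (hconv.lipschitzOnWith_of_nnnorm_hasFDerivWithin_le hh fun x hx =>
        NNReal.le_toNNReal_of_coe_le (hh' x hx)) (Real.toNNReal_lt_one.2 hC) h0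
  have hderiv : ∀ x ∈ s, HasFDerivWithinAt (fun x => x + h x) (1 + h' x) s x := fun x hx =>
    (hasFDerivWithinAt_id x s).add (hh x hx)
  have hpos : ∀ x ∈ s, 0 < (1 + h' x).det := fun x hx =>
    det_one_add_pos_of_norm_lt_one ((hh' x hx).trans_lt hC)
  calc ∫ x in s, (1 + h' x).det ∂μ
      = ∫ x in s, |(1 + h' x).det| • (1 : ℝ) ∂μ :=
        setIntegral_congr_fun hs.measurableSet fun x hx => by
          simp only [smul_eq_mul, mul_one, abs_of_pos (hpos x hx)]
    _ = ∫ _ in (fun x => x + h x) '' s, (1 : ℝ) ∂μ :=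
        (integral_image_eq_integral_abs_det_fderiv_smul μ hs.measurableSet hderiv hbij.injOn
          fun _ => 1).symm
    _ = μ.real s := by rw [hbij.image_eq, setIntegral_const, smul_eq_mul, mul_one]

theorem setIntegral_det_of_eqOn_id_frontier (hs : IsCompact s) (hconv : Convex ℝ s)
    {r : E → E} {r' : E → E →L[ℝ] E} (hr : ∀ x ∈ s, HasFDerivWithinAt r (r' x) s x)
    (hr' : ContinuousOn r' s) (hid : EqOn r id (frontier s)) :
    ∫ x in s, (r' x).det ∂μ = μ.real s := by
  obtain ⟨C, hC⟩ := hs.exists_bound_of_continuousOn (hr'.sub (continuousOn_const (c := 1)))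
  choose p hpdeg hp using fun x =>
    exists_polynomial_eval_eq_det_one_add_smul ((r' x - 1 : E →L[ℝ] E) : E →ₗ[ℝ] E)
  have heval (x : E) (t : ℝ) : (p x).eval t = (1 + t • (r' x - 1)).det := hp x t
  have hint (t : ℝ) : IntegrableOn (fun x => (p x).eval t) s μ := by
    simp only [heval]
    exact ContinuousOn.integrableOn_compact hs
      (ContinuousLinearMap.continuous_det.comp_continuousOn (by fun_prop))
  have hsmall : ∀ t ∈ Ioo 0 (1 / (|C| + 1)), ∫ x in s, (p x).eval t ∂μ = μ.real s := by
    intro t ⟨ht0, ht1⟩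
    have htC : t * |C| < 1 := by
      rw [lt_div_iff₀ (by positivity)] at ht1
      linarith
    simp only [heval]
    refine setIntegral_det_one_add_of_norm_le μ htC hs.isClosed hconv (h := fun x => t • (r x - x))
      (fun x hx => ((hr x hx).sub (hasFDerivWithinAt_id x s)).const_smul t)
      (fun x hx => ?_) fun x hx => by simp [hid hx]
    rw [norm_smul, Real.norm_of_nonneg ht0.le]
    exact mul_le_mul_of_nonneg_left ((hC x hx).trans (le_abs_self C)) ht0.le
  have h1 := integral_eval_eq_of_infinite hpdeg (Ioo_infinite (by positivity))
    (fun t _ => hint t) hsmall 1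
  simpa only [heval, one_smul, add_sub_cancel] using h1

end Volume

section NoRetraction

variable {E : Type*} [NormedAddCommGroup E] [NormedSpace ℝ E] [FiniteDimensional ℝ E]

theorem det_eq_zero_of_eventually_mem {s : Set E} (hs : interior s = ∅) {r : E → E}
    {r' : E →L[ℝ] E} {x : E} (hr : HasStrictFDerivAt r r' x)
    (hmem : ∀ᶠ y in nhds x, r y ∈ s) : r'.det = 0 := by
  have := FiniteDimensional.complete ℝ E
  by_contra hdet
  have hmap : Filter.map r (nhds x) = nhds (r x) :=
    HasStrictFDerivAt.map_nhds_eq_of_equiv (f' := r'.toContinuousLinearEquivOfDetNeZero hdet) hr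
  have hrx : r x ∈ interior s := mem_interior_iff_mem_nhds.2 (hmap ▸ hmem)
  simp [hs] at hrx

theorem not_mapsTo_frontier_of_contDiff_of_eqOn_id {s : Set E} (hs : IsCompact s)
    (hconv : Convex ℝ s) (hne : (interior s).Nonempty) {r : E → E} (hr : ContDiff ℝ 1 r)
    (hid : EqOn r id (frontier s)) : ¬ MapsTo r s (frontier s) := by
  intro hmaps
  borelize E
  let μ : Measure E := Measure.addHaar
  have hdet : ∀ x ∈ interior s, (fderiv ℝ r x).det = 0 := fun x hx =>
    det_eq_zero_of_eventually_mem (interior_frontier hs.isClosed)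
      (hr.contDiffAt.hasStrictFDerivAt one_ne_zero)
      (Filter.mem_of_superset (mem_interior_iff_mem_nhds.1 hx) hmaps)
  have hzero : ∫ x in s, (fderiv ℝ r x).det ∂μ = 0 := by
    refine setIntegral_eq_zero_of_ae_eq_zero ?_
    filter_upwards [measure_eq_zero_iff_ae_notMem.1 (hconv.addHaar_frontier μ)] with x hx hxs
    exact hdet x (by_contra fun hxi => hx ⟨subset_closure hxs, hxi⟩)
  have hvol : ∫ x in s, (fderiv ℝ r x).det ∂μ = μ.real s :=
    setIntegral_det_of_eqOn_id_frontier μ hs hconv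
      (fun x _ => (hr.differentiable one_ne_zero x).hasFDerivAt.hasFDerivWithinAt)
      (hr.continuous_fderiv one_ne_zero).continuousOn hid
  have hpos : 0 < μ.real s :=
    ENNReal.toReal_pos (Measure.measure_pos_of_nonempty_interior μ hne).ne' hs.measure_ne_top
  exact hpos.ne' (hvol.symm.trans hzero)

end NoRetraction

section BoundedMap

variable {E : Type*} [NormedAddCommGroup E] [InnerProductSpace ℝ E] [FiniteDimensional ℝ E]

theorem exists_isFixedPt_of_contDiff_of_norm_le {f : E → E} (hf : ContDiff ℝ 1 f)
    {R : ℝ} (hR : ∀ x, ‖f x‖ ≤ R) : ∃ x, IsFixedPt f x := by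
  by_contra! hfix
  -- Cutting `f` off by `χ` makes `u` the identity far out; a zero of `u` lies where `χ = 1`.
  have hR0 : 0 ≤ R := (norm_nonneg _).trans (hR 0)
  let χ : ContDiffBump (0 : E) := ⟨R + 1, R + 2, by linarith, by linarith⟩
  let u : E → E := fun x => x - χ x • f x
  have hu : ContDiff ℝ 1 u := contDiff_id.sub (χ.contDiff.smul hf)
  have hu_eq : ∀ x, ‖x‖ = R + 2 → u x = x := fun x hx => by
    have hχ : χ x = 0 := χ.zero_of_le_dist (by rw [dist_zero_right, hx])
    simp [u, hχ]
  have hu_ne : ∀ x, u x ≠ 0 := by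
    intro x hux
    have hx : x = χ x • f x := sub_eq_zero.1 hux
    have hxR : ‖x‖ ≤ R := by
      rw [hx, norm_smul, Real.norm_of_nonneg χ.nonneg]
      exact (mul_le_of_le_one_left (norm_nonneg _) χ.le_one).trans (hR x)
    have hχ : χ x = 1 := χ.one_of_mem_closedBall (mem_closedBall_zero_iff.2 (by
      change ‖x‖ ≤ R + 1
      linarith))
    exact hfix x (by rw [IsFixedPt, ← one_smul ℝ (f x), ← hχ, ← hx])
  have hfrontier : frontier (closedBall (0 : E) (R + 2)) = sphere 0 (R + 2) :=
    frontier_closedBall 0 (by positivity)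
  refine not_mapsTo_frontier_of_contDiff_of_eqOn_id (isCompact_closedBall (0 : E) (R + 2))
    (convex_closedBall _ _) ⟨0, ball_subset_interior_closedBall (by simp; linarith)⟩
    (r := fun x => ((R + 2) / ‖u x‖) • u x) ?_ ?_ ?_
  · exact (contDiff_const.div (hu.norm ℝ hu_ne) fun x => norm_ne_zero_iff.2 (hu_ne x)).smul hu
  · intro x hx
    rw [hfrontier, mem_sphere_zero_iff_norm] at hx
    simp only [hu_eq x hx, hx, id, div_self (by positivity : R + 2 ≠ 0), one_smul]
  · intro x _
    have hnorm : ‖u x‖ ≠ 0 := norm_ne_zero_iff.2 (hu_ne x)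
    rw [hfrontier, mem_sphere_zero_iff_norm, norm_smul, norm_div, norm_norm,
      div_mul_cancel₀ _ hnorm, Real.norm_of_nonneg (by positivity)]

theorem exists_isFixedPt_of_continuous_of_norm_le {f : E → E} (hf : Continuous f)
    {R : ℝ} (hR : ∀ x, ‖f x‖ ≤ R) : ∃ x, IsFixedPt f x := by
  have hR0 : 0 ≤ R := (norm_nonneg _).trans (hR 0)
  obtain ⟨x₀, -, hmin⟩ := (isCompact_closedBall (0 : E) (R + 1)).exists_isMinOn
    (nonempty_closedBall.2 (by positivity)) (f := fun x => dist x (f x)) (by fun_prop)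
  refine ⟨x₀, by_contra fun hx₀ => ?_⟩
  have hε : 0 < min 1 (dist x₀ (f x₀)) := lt_min one_pos (dist_pos.2 (Ne.symm hx₀))
  obtain ⟨g, hg, hgf, -⟩ := hf.exists_contDiff_approx 1 continuous_const fun _ => hε
  have hgR : ∀ x, ‖g x‖ ≤ R + 1 := fun x => by
    have hdist : ‖g x - f x‖ < 1 := dist_eq_norm (g x) (f x) ▸ (hgf x).trans_le (min_le_left _ _)
    linarith [norm_le_norm_add_norm_sub' (g x) (f x), hR x]
  obtain ⟨x, hx⟩ := exists_isFixedPt_of_contDiff_of_norm_le hg hgR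
  have hxR : x ∈ closedBall 0 (R + 1) := mem_closedBall_zero_iff.2 (hx.eq ▸ hgR x)
  have hlt : dist x (f x) < dist x₀ (f x₀) :=
    calc dist x (f x) = dist (g x) (f x) := by rw [hx.eq]
      _ < dist x₀ (f x₀) := (hgf x).trans_le (min_le_right _ _)
  exact (hmin hxR).not_gt hlt

end BoundedMap

section Brouwer

variable {E : Type*} [NormedAddCommGroup E] [NormedSpace ℝ E] [FiniteDimensional ℝ E]

theorem exists_isFixedPt_of_isBounded_range {f : E → E} (hf : Continuous f)
    (hbdd : Bornology.IsBounded (range f)) : ∃ x, IsFixedPt f x := by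
  let e := toEuclidean (E := E)
  obtain ⟨R, hR⟩ := (e.lipschitz.isBounded_image hbdd).exists_norm_le
  obtain ⟨y, hy⟩ := exists_isFixedPt_of_continuous_of_norm_le
    (e.continuous.comp (hf.comp e.symm.continuous)) fun y =>
      hR _ (mem_image_of_mem e (mem_range_self (e.symm y)))
  exact ⟨e.symm y, (e.symm_apply_apply _).symm.trans (congrArg e.symm hy.eq)⟩

/-- **Brouwer's fixed point theorem** -/
theorem exists_isFixedPt_of_mapsTo_closedBall {c : E} {ρ : ℝ} (hρ : 0 ≤ ρ) {f : E → E}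
    (hf : ContinuousOn f (closedBall c ρ)) (hmaps : MapsTo f (closedBall c ρ) (closedBall c ρ)) :
    ∃ x ∈ closedBall c ρ, IsFixedPt f x := by
  rcases hρ.eq_or_lt with rfl | hρ
  · have hc := hmaps (mem_closedBall_self le_rfl)
    rw [closedBall_zero, mem_singleton_iff] at hc
    exact ⟨c, mem_closedBall_self le_rfl, hc⟩
  have := Metric.instTietzeExtensionClosedBall ℝ c hρ
  obtain ⟨g, hg⟩ := ContinuousMap.exists_restrict_eq isClosed_closedBall
    ⟨hmaps.restrict, hf.mapsToRestrict hmaps⟩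
  obtain ⟨x, hx⟩ := exists_isFixedPt_of_isBounded_range (f := fun x => (g x : E))
    (by fun_prop) (isBounded_closedBall.subset (range_subset_iff.2 fun x => (g x).2))
  have hxc : x ∈ closedBall c ρ := hx.eq ▸ (g x).2
  have hgf : (g x : E) = f x := congrArg Subtype.val (DFunLike.congr_fun hg ⟨x, hxc⟩)
  exact ⟨x, hxc, hgf.symm.trans hx.eq⟩

end Brouwer

section Intersection

variable {E₁ E₂ : Type*} [NormedAddCommGroup E₁] [NormedSpace ℝ E₁] [FiniteDimensional ℝ E₁]
  [NormedAddCommGroup E₂] [NormedSpace ℝ E₂] [FiniteDimensional ℝ E₂] {ρ ε₁ ε₂ : ℝ}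

theorem exists_apply_eq_apply_of_norm_sub_le (hρ : 0 ≤ ρ) (hε : ε₁ + ε₂ ≤ ρ) (k : E₁ × E₂)
    {f : E₁ → E₁ × E₂} {g : E₂ → E₁ × E₂} (hf : ContinuousOn f (closedBall 0 ρ))
    (hg : ContinuousOn g (closedBall 0 ρ))
    (hfk : ∀ x ∈ closedBall 0 ρ, ‖f x - ((x, 0) + k)‖ ≤ ε₁)
    (hgk : ∀ y ∈ closedBall 0 ρ, ‖g y - ((0, y) + k)‖ ≤ ε₂) :
    ∃ x ∈ closedBall 0 ρ, ∃ y ∈ closedBall 0 ρ, f x = g y := by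
  let d : E₁ × E₂ → E₁ × E₂ := fun z => f z.1 - g z.2
  let Φ : E₁ × E₂ → E₁ × E₂ := fun z => z + (-(d z).1, (d z).2)
  have hball : closedBall (0 : E₁ × E₂) ρ = closedBall 0 ρ ×ˢ closedBall 0 ρ :=
    (closedBall_prod_same 0 0 ρ).symm
  have hΦ : ContinuousOn Φ (closedBall 0 ρ) := by
    have hd : ContinuousOn d (closedBall 0 ρ) := by
      rw [hball]
      exact (hf.comp continuousOn_fst fun z hz => hz.1).sub
        (hg.comp continuousOn_snd fun z hz => hz.2)
    fun_prop
  have hmaps : MapsTo Φ (closedBall 0 ρ) (closedBall 0 ρ) := by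
    intro z hz
    rw [hball] at hz
    let e := (f z.1 - ((z.1, 0) + k)) - (g z.2 - ((0, z.2) + k))
    have hΦe : Φ z = (-e.1, e.2) := by
      ext <;> simp [Φ, d, e] <;> abel
    rw [mem_closedBall_zero_iff]
    calc ‖Φ z‖ = ‖e‖ := by rw [hΦe, Prod.norm_def, Prod.norm_def, norm_neg]
      _ ≤ ε₁ + ε₂ := (norm_sub_le _ _).trans (add_le_add (hfk _ hz.1) (hgk _ hz.2))
      _ ≤ ρ := hε
  obtain ⟨z, hz, hzΦ⟩ := exists_isFixedPt_of_mapsTo_closedBall hρ hΦ hmaps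
  have hd : d z = 0 := by
    simpa [Prod.ext_iff] using add_eq_left.1 hzΦ.eq
  rw [hball] at hz
  exact ⟨z.1, hz.1, z.2, hz.2, sub_eq_zero.1 hd⟩

theorem stmt1_general (hρ : 0 ≤ ρ) (hε : ε₁ + ε₂ ≤ ρ) (k₀ : E₁ × E₂)
    (Ψ₁ Ψ₂ : E₁ × E₂ → E₁ × E₂)
    (hc₁ : ContinuousOn Ψ₁ {x | x.1 ∈ closedBall 0 ρ ∧ x.2 = 0})
    (hc₂ : ContinuousOn Ψ₂ {x | x.1 = 0 ∧ x.2 ∈ closedBall 0 ρ})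
    (h₁ : ∀ r : E₁ × E₂, r.1 ∈ closedBall 0 ρ → r.2 = 0 → ‖Ψ₁ r - (r + k₀)‖ ≤ ε₁)
    (h₂ : ∀ s : E₁ × E₂, s.1 = 0 → s.2 ∈ closedBall 0 ρ → ‖Ψ₂ s - (s + k₀)‖ ≤ ε₂) :
    ((Ψ₁ '' {x | x.1 ∈ closedBall 0 ρ ∧ x.2 = 0}) ∩
      (Ψ₂ '' {x | x.1 = 0 ∧ x.2 ∈ closedBall 0 ρ})).Nonempty := by
  obtain ⟨x, hx, y, hy, hxy⟩ := exists_apply_eq_apply_of_norm_sub_le hρ hε k₀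
    (f := fun x => Ψ₁ (x, 0)) (g := fun y => Ψ₂ (0, y))
    (hc₁.comp (by fun_prop) fun x hx => ⟨hx, rfl⟩) (hc₂.comp (by fun_prop) fun y hy => ⟨rfl, hy⟩)
    (fun x hx => h₁ (x, 0) hx rfl) fun y hy => h₂ (0, y) rfl hy
  exact ⟨Ψ₁ (x, 0), mem_image_of_mem Ψ₁ ⟨hx, rfl⟩, hxy ▸ mem_image_of_mem Ψ₂ ⟨rfl, hy⟩⟩

end Intersection

/-- Two continuous maps defined on the two "coordinate" closed unit balls of
`ℝ^{m₁} × ℝ^{m₂}`, each moving points by at most `1/4` away from a common translation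
by `k₀` (in the norm `‖(x,y)‖ = ‖x‖ + ‖y‖`), have intersecting images. -/
theorem stmt1 (m₁ m₂ : ℕ)
    (k₀ : EuclideanSpace ℝ (Fin m₁) × EuclideanSpace ℝ (Fin m₂))
    (Ψ₁ Ψ₂ : EuclideanSpace ℝ (Fin m₁) × EuclideanSpace ℝ (Fin m₂) →
      EuclideanSpace ℝ (Fin m₁) × EuclideanSpace ℝ (Fin m₂))
    (hc₁ : ContinuousOn Ψ₁ {x | x.1 ∈ Metric.closedBall 0 1 ∧ x.2 = 0})
    (hc₂ : ContinuousOn Ψ₂ {x | x.1 = 0 ∧ x.2 ∈ Metric.closedBall 0 1})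
    (h₁ : ∀ r : EuclideanSpace ℝ (Fin m₁) × EuclideanSpace ℝ (Fin m₂),
      r.1 ∈ Metric.closedBall 0 1 → r.2 = 0 →
      ‖(Ψ₁ r).1 - (r.1 + k₀.1)‖ + ‖(Ψ₁ r).2 - (r.2 + k₀.2)‖ ≤ 1 / 4)
    (h₂ : ∀ s : EuclideanSpace ℝ (Fin m₁) × EuclideanSpace ℝ (Fin m₂),
      s.1 = 0 → s.2 ∈ Metric.closedBall 0 1 →
      ‖(Ψ₂ s).1 - (s.1 + k₀.1)‖ + ‖(Ψ₂ s).2 - (s.2 + k₀.2)‖ ≤ 1 / 4) :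
    ((Ψ₁ '' {x | x.1 ∈ Metric.closedBall 0 1 ∧ x.2 = 0}) ∩
      (Ψ₂ '' {x | x.1 = 0 ∧ x.2 ∈ Metric.closedBall 0 1})).Nonempty := by
  exact stmt1_general zero_le_one (by norm_num) k₀ Ψ₁ Ψ₂ hc₁ hc₂
    (fun r hr hr' => (max_le_add_of_nonneg (norm_nonneg _) (norm_nonneg _)).trans (h₁ r hr hr'))
    fun s hs hs' => (max_le_add_of_nonneg (norm_nonneg _) (norm_nonneg _)).trans (h₂ s hs hs')
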